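/- There exists a constant c > 0 depending only on m and n such that the following holds. Let t ≥ 1 be an integer and suppose ω₀, …, ω_d > 0 and T > 0 are such that the function α̃(x) = Σ_{i=0}^{d} (ω_i α_i(x))^{β_i} (with β₀ = β_d = 1) satisfies ∫_{M_{m,n}(𝒪_∞)} α̃(g_t u_s y) dμ_{mn}(s) ≤ 3 c t q^{−mnt} α̃(y) for every y ∈ X with α̃(y) > T. Then there exists M₀ = M₀(t) > T such that for every x ∈ X, every integer N ≥ 1, and every M > M₀, the set Z_x(M, N, t) = {s ∈ M_{m,n}(𝒪_∞) : α̃(g_{ℓt} u_s x) > M for all integers ℓ ∈ {1, …, N}} can be covered by at most (α̃(x)/M) (3ct)^N q^{(m+n−1)mntN} balls in M_{m,n}(𝒪_∞) of radius q^{−(m+n)tN}. -/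

import Mathlib

/-!
The covering bound is obtained by a recursion in `N` on finite sets of residues, without iterating
integrals.

Conjugation by `g_t` multiplies the horospherical parameter `s` by `T^{(m+n)t}`, and `α̃` is
invariant under `u_s` with `s` integral, since `u_s` and its inverse have integral entries and so
preserve the norms of wedge products (`alphaTilde_uElem`). Hence `s ↦ α̃(g_t u_s y)` depends only on
`s` modulo `u^K`, where `K = (m+n)t` and `u = T⁻¹`. The `q^{Kmn}` residue classes are balls of equal
measure, so the contraction hypothesis says exactly that, over representatives `r` of the classes,
`∑_r α̃(g_t u_r y) ≤ L α̃(y)` with `L = 3ct q^{(m+n-1)mnt}` (`sum_digits_le`).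

Write `s = r + u^K s'`. The orbit of `u_s x` after time `t` is the orbit of `u_{s'} y_r`, with
`y_r = g_t u_r x` (`shift_orbit`). So `Z_x(M, N+1, t)` is the union, over the classes with
`α̃(y_r) > M`, of the rescaled copies `r + u^K Z_{y_r}(M, N, t)`. If `Z_{y_r}(M, N, t)` is covered by
`α̃(y_r) L^N / M` balls, summing over `r` gives `α̃(x) L^{N+1} / M` balls for `Z_x(M, N+1, t)`
(`covered_step`). The recursion starts at `N = 0` with a single ball, which is allowed because
`α̃(y) > M` there.

The first step needs only `α̃(x) > T`. When `α̃(x) ≤ T`, the bounded distortion of `α̃` under `g_t`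
(`alphaTilde_smul_bound`) makes `Z_x(M, N, t)` empty as soon as `M₀` exceeds the distortion constant
times `T`. Both this and the invariance under `u_s` follow from comparing `i × i` minors under
multiplication by a matrix with bounded entries (`wedgeNorm_mul_le`).
-/

open MeasureTheory
open scoped Classical ENNReal

set_option synthInstance.maxHeartbeats 1000000
set_option maxHeartbeats 1000000
set_option linter.unusedSectionVars false

noncomputable section

variable (F : Type*) [Field F] [Fintype F]

/- We realize the completion `K_∞ = 𝔽_q((T⁻¹))` of `K = 𝔽_q(T)` at the place at infinity as
the field of Laurent series in the uniformizer `u = T⁻¹`; the valuation `v` is the `u`-adic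
valuation (the order), and `|x| = q^{-v(x)}`. -/

/-- The absolute value `|x| = q^{-v(x)}` on `K_∞ = 𝔽_q((T⁻¹))`. -/
def absv (x : LaurentSeries F) : ℝ :=
  if x = 0 then 0 else (Fintype.card F : ℝ) ^ (-(HahnSeries.order x))

instance : MeasurableSpace (LaurentSeries F) := borel _

instance (m n : ℕ) : MeasurableSpace (Matrix (Fin m) (Fin n) (LaurentSeries F)) := borel _

/-- the set of matrices with all entries in the valuation ring `𝒪_∞ = 𝔽_q[[T⁻¹]]`. -/
def intMat (m n : ℕ) : Set (Matrix (Fin m) (Fin n) (LaurentSeries F)) :=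
  {s | ∀ k l, absv F (s k l) ≤ 1}

/-- sup norm of a vector in `K_∞^d`. -/
def supNorm {d : ℕ} (v : Fin d → LaurentSeries F) : ℝ := ⨆ j, absv F (v j)

/-- the `i × i` minor of a `d × i` matrix with row set `I`. -/
def minor {d i : ℕ} (s : Matrix (Fin d) (Fin i) (LaurentSeries F))
    (I : {I : Finset (Fin d) // I.card = i}) : LaurentSeries F :=
  (s.submatrix (fun a : Fin i => ((I.1.orderIsoOfFin I.2 a : {x // x ∈ I.1}) : Fin d)) id).det

/-- The norm `‖v₁ ∧ ⋯ ∧ v_i‖` of the wedge product of the columns of a `d × i` matrix: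
the maximum of the absolute values of its `i × i` minors. -/
def wedgeNorm {d i : ℕ} (s : Matrix (Fin d) (Fin i) (LaurentSeries F)) : ℝ :=
  ⨆ I : {I : Finset (Fin d) // I.card = i}, absv F (minor F s I)

/-- the norm of the wedge product `b₁ ∧ ⋯ ∧ b_i` of a tuple of vectors of `K_∞^d`. -/
def wedgeNormVecs {d i : ℕ} (b : Fin i → (Fin d → LaurentSeries F)) : ℝ :=
  wedgeNorm F (Matrix.of fun k j => b j k)

/-- the embedding `R = 𝔽_q[T] ↪ K_∞`, sending `T` to `u⁻¹` (`u = T⁻¹` the Laurent variable). -/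
def polyToK : Polynomial F →+* LaurentSeries F :=
  (Polynomial.aeval (HahnSeries.single (-1 : ℤ) (1 : F) : LaurentSeries F)).toRingHom

/-- `G = SL_d(K_∞)`. -/
abbrev SLK (d : ℕ) := Matrix.SpecialLinearGroup (Fin d) (LaurentSeries F)

/-- `Γ = SL_d(R)`, realized as the subgroup of `G` of matrices with entries in
`R = 𝔽_q[T]`. -/
def Gamma (d : ℕ) : Subgroup (SLK F d) :=
  (Matrix.SpecialLinearGroup.map (polyToK F)).range

/-- the homogeneous space `X = G/Γ`, identified with the `G`-orbit of the lattice `R^d`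
(`gΓ ↔ g R^d`). -/
abbrev XSpace (d : ℕ) := SLK F d ⧸ Gamma F d

/-- `u = T⁻¹ ∈ K_∞`, the uniformizer. -/
def Xu : LaurentSeries F := HahnSeries.single 1 1

lemma Xu_ne_zero : Xu F ≠ 0 := HahnSeries.single_ne_zero one_ne_zero

/-- the matrix of the diagonal element `g_t = diag((T⁻¹)^{-nt} I_m, (T⁻¹)^{mt} I_n)`. -/
def gMat (m n : ℕ) (t : ℤ) : Matrix (Fin (m + n)) (Fin (m + n)) (LaurentSeries F) :=
  Matrix.reindex finSumFinEquiv finSumFinEquiv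
    (Matrix.fromBlocks ((Xu F ^ (-(n * t))) • (1 : Matrix (Fin m) (Fin m) (LaurentSeries F))) 0 0
      ((Xu F ^ ((m : ℤ) * t)) • (1 : Matrix (Fin n) (Fin n) (LaurentSeries F))))

lemma gMat_det (m n : ℕ) (t : ℤ) : (gMat F m n t).det = 1 := by
  unfold gMat
  rw [Matrix.det_reindex_self, Matrix.det_fromBlocks_zero₂₁, Matrix.det_smul, Matrix.det_smul,
    Matrix.det_one, Matrix.det_one, mul_one, mul_one, Fintype.card_fin, Fintype.card_fin,
    ← zpow_natCast (Xu F ^ (-((n : ℤ) * t))) m, ← zpow_natCast (Xu F ^ ((m : ℤ) * t)) n,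
    ← zpow_mul, ← zpow_mul, ← zpow_add₀ (Xu_ne_zero F)]
  rw [show (-((n : ℤ) * t)) * (m : ℤ) + ((m : ℤ) * t) * (n : ℤ) = 0 by ring, zpow_zero]

/-- the element `g_t ∈ G`. -/
def gElem (m n : ℕ) (t : ℤ) : SLK F (m + n) := ⟨gMat F m n t, gMat_det F m n t⟩

/-- the matrix of the upper block-unipotent element `u_s` with blocks `(I_m, s; 0, I_n)`. -/
def uMat {m n : ℕ} (s : Matrix (Fin m) (Fin n) (LaurentSeries F)) :
    Matrix (Fin (m + n)) (Fin (m + n)) (LaurentSeries F) :=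
  Matrix.reindex finSumFinEquiv finSumFinEquiv (Matrix.fromBlocks 1 s 0 1)

lemma uMat_det {m n : ℕ} (s : Matrix (Fin m) (Fin n) (LaurentSeries F)) :
    (uMat F s).det = 1 := by
  unfold uMat
  rw [Matrix.det_reindex_self, Matrix.det_fromBlocks_zero₂₁, Matrix.det_one, Matrix.det_one,
    mul_one]

/-- the element `u_s ∈ G`. -/
def uElem {m n : ℕ} (s : Matrix (Fin m) (Fin n) (LaurentSeries F)) : SLK F (m + n) :=
  ⟨uMat F s, uMat_det F s⟩

/-- The lattice in `K_∞^d` corresponding to a point `x ∈ X = G/Γ`: the set `g R^d` for any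
representative `g` of the coset `x`. -/
def latticeSet {d : ℕ} (x : XSpace F d) : Set (Fin d → LaurentSeries F) :=
  {v | ∃ g : SLK F d, (QuotientGroup.mk g : XSpace F d) = x ∧
    ∃ w : Fin d → Polynomial F, v = (g : Matrix (Fin d) (Fin d) (LaurentSeries F)).mulVec
      (fun j => polyToK F (w j))}

/-- `α_i(x) = max{ 1/‖L‖ : L an i-dimensional x-rational subspace }` for `1 ≤ i ≤ d-1`,
and `α_0(x) = α_d(x) = 1`.  Here a subspace `L ⊆ K_∞^d` is `x`-rational if `L ∩ x` is a
lattice in `L`, and then `‖L‖ = ‖w₁ ∧ ⋯ ∧ w_i‖` for an `R`-basis `w₁, …, w_i` of `L ∩ x`;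
equivalently below, the supremum runs over all tuples `b = (b₁, …, b_i)` of `K_∞`-linearly
independent vectors of the lattice `x` generating `(K_∞-span of b) ∩ x` over `R`. -/
def alpha (d : ℕ) (i : ℕ) (x : XSpace F d) : ℝ :=
  if i = 0 ∨ i = d then 1 else
  sSup {r : ℝ | ∃ b : Fin i → (Fin d → LaurentSeries F),
    (∀ j, b j ∈ latticeSet F x) ∧
    LinearIndependent (LaurentSeries F) b ∧
    (∀ v ∈ latticeSet F x, v ∈ Submodule.span (LaurentSeries F) (Set.range b) →
      ∃ c : Fin i → Polynomial F, v = ∑ j, polyToK F (c j) • b j) ∧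
    r = (wedgeNormVecs F b)⁻¹}

/-- the exponent `β_i = m/i` for `1 ≤ i ≤ m` and `n/(m+n-i)` for `m < i ≤ m+n-1`. -/
def betaE (m n i : ℕ) : ℝ := if i ≤ m then (m : ℝ) / i else (n : ℝ) / ((m + n - i : ℕ) : ℝ)

/-- the exponent `β_i` extended by `β_0 = β_{m+n} = 1`. -/
def betaFull (m n i : ℕ) : ℝ := if i = 0 ∨ i = m + n then 1 else betaE m n i

/-- the Margulis function `α̃ = Σ_{i=0}^{d} (ω_i α_i)^{β_i}`. -/
def alphaTilde (m n : ℕ) (ω : ℕ → ℝ) (x : XSpace F (m + n)) : ℝ :=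
  ∑ i ∈ Finset.range (m + n + 1), (ω i * alpha F (m + n) i x) ^ (betaFull m n i)

end

/-! ### The absolute value -/

lemma one_lt_q (F : Type*) [Field F] [Fintype F] : (1 : ℝ) < (Fintype.card F : ℝ) := by
  exact_mod_cast Fintype.one_lt_card

lemma absv_nonneg (F : Type*) [Field F] [Fintype F] (x : LaurentSeries F) : 0 ≤ absv F x := by
  unfold absv
  split_ifs
  · exact le_rfl
  · positivity

lemma absv_le_iff (F : Type*) [Field F] [Fintype F] (k : ℤ) (x : LaurentSeries F) :
    absv F x ≤ (Fintype.card F : ℝ) ^ (-k) ↔ ∀ j < k, x.coeff j = 0 := by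
  unfold absv
  split_ifs with h
  · subst h
    simp only [HahnSeries.coeff_zero, implies_true, iff_true]
    positivity
  · rw [zpow_le_zpow_iff_right₀ (one_lt_q F), neg_le_neg_iff, HahnSeries.le_order_iff_forall h]

/-- The absolute value is multiplicative. -/
noncomputable def absvHom (F : Type*) [Field F] [Fintype F] : LaurentSeries F →*₀ ℝ where
  toFun := absv F
  map_zero' := by simp [absv]
  map_one' := by simp [absv]
  map_mul' x y := by
    have hq : (Fintype.card F : ℝ) ≠ 0 := by have := one_lt_q F; positivity
    unfold absv
    by_cases hx : x = 0
    · simp [hx]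
    by_cases hy : y = 0
    · simp [hy]
    rw [if_neg (mul_ne_zero hx hy), if_neg hx, if_neg hy, HahnSeries.order_mul hx hy, neg_add,
      zpow_add₀ hq]

lemma absv_mul (F : Type*) [Field F] [Fintype F] (x y : LaurentSeries F) :
    absv F (x * y) = absv F x * absv F y := map_mul (absvHom F) x y

lemma absv_zero (F : Type*) [Field F] [Fintype F] : absv F 0 = 0 := map_zero (absvHom F)

lemma absv_one (F : Type*) [Field F] [Fintype F] : absv F 1 = 1 := map_one (absvHom F)

lemma absv_neg (F : Type*) [Field F] [Fintype F] (x : LaurentSeries F) :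
    absv F (-x) = absv F x := by
  simp [absv, HahnSeries.order_neg]

lemma absv_Xu_zpow (F : Type*) [Field F] [Fintype F] (k : ℤ) :
    absv F (Xu F ^ k) = (Fintype.card F : ℝ) ^ (-k) := by
  have h : absv F (Xu F ^ k) = absv F (Xu F) ^ k := map_zpow₀ (absvHom F) (Xu F) k
  have h1 : absv F (Xu F) = (Fintype.card F : ℝ)⁻¹ := by
    rw [absv, if_neg (Xu_ne_zero F), Xu, HahnSeries.order_single one_ne_zero, zpow_neg_one]
  rw [h, h1, inv_zpow, zpow_neg]

lemma absv_add_le (F : Type*) [Field F] [Fintype F] {x y : LaurentSeries F} {B : ℝ}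
    (hx : absv F x ≤ B) (hy : absv F y ≤ B) : absv F (x + y) ≤ B := by
  by_cases hx0 : x = 0
  · simpa [hx0] using hy
  by_cases hy0 : y = 0
  · simpa [hy0] using hx
  by_cases h : x + y = 0
  · rw [h, absv_zero]
    exact (absv_nonneg F x).trans hx
  have h1 := HahnSeries.min_order_le_order_add h
  unfold absv at *
  rw [if_neg hx0] at hx
  rw [if_neg hy0] at hy
  rw [if_neg h]
  rcases min_le_iff.1 h1 with h2 | h2
  · exact (zpow_le_zpow_right₀ (one_lt_q F).le (neg_le_neg h2)).trans hx
  · exact (zpow_le_zpow_right₀ (one_lt_q F).le (neg_le_neg h2)).trans hy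

lemma absv_sum_le (F : Type*) [Field F] [Fintype F] {ι : Type*} (s : Finset ι)
    (f : ι → LaurentSeries F) {B : ℝ} (hB : 0 ≤ B) (h : ∀ a ∈ s, absv F (f a) ≤ B) :
    absv F (∑ a ∈ s, f a) ≤ B := by
  induction s using Finset.induction_on with
  | empty => simpa [absv_zero] using hB
  | insert a s ha ih =>
    rw [Finset.sum_insert ha]
    exact absv_add_le F (h a (by simp)) (ih fun b hb => h b (by simp [hb]))

lemma absv_prod (F : Type*) [Field F] [Fintype F] {ι : Type*} (s : Finset ι)
    (f : ι → LaurentSeries F) : absv F (∏ a ∈ s, f a) = ∏ a ∈ s, absv F (f a) :=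
  map_prod (absvHom F) f s

/-! ### Wedge norms under linear maps -/

lemma wedgeNorm_nonneg (F : Type*) [Field F] [Fintype F] {d i : ℕ}
    (s : Matrix (Fin d) (Fin i) (LaurentSeries F)) : 0 ≤ wedgeNorm F s :=
  Real.iSup_nonneg fun _ => absv_nonneg F _

/-- Any `i` rows, in any order and possibly repeated, give a determinant bounded by the wedge
norm. -/
lemma absv_det_rows_le (F : Type*) [Field F] [Fintype F] {d i : ℕ}
    (s : Matrix (Fin d) (Fin i) (LaurentSeries F)) (r : Fin i → Fin d) :
    absv F (s.submatrix r id).det ≤ wedgeNorm F s := by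
  by_cases hr : Function.Injective r
  · let I : {I : Finset (Fin d) // I.card = i} :=
      ⟨Finset.univ.image r, by rw [Finset.card_image_of_injective _ hr]; simp⟩
    let e := I.1.orderIsoOfFin I.2
    let σ0 : Fin i → Fin i := fun a => e.symm ⟨r a, by simp [I]⟩
    have hσ : Function.Injective σ0 := by
      intro a b hab
      have := e.symm.injective hab
      exact hr (Subtype.mk.inj this)
    let σ : Equiv.Perm (Fin i) := Equiv.ofBijective σ0 (Finite.injective_iff_bijective.1 hσ)
    have hs : s.submatrix r id
        = (s.submatrix (fun a : Fin i => ((e a : {x // x ∈ I.1}) : Fin d)) id).submatrix σ id := by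
      ext a b
      simp [σ, σ0]
    have hle : absv F (minor F s I) ≤ wedgeNorm F s :=
      le_ciSup (f := fun I : {I : Finset (Fin d) // I.card = i} => absv F (minor F s I))
        (Set.finite_range _).bddAbove I
    rw [hs, Matrix.det_permute]
    refine le_trans (le_of_eq ?_) hle
    rcases Int.units_eq_one_or (Equiv.Perm.sign σ) with h | h <;>
      simp [h, minor, e, absv_neg]
  · rw [Function.Injective] at hr
    push Not at hr
    obtain ⟨a, b, hab, hne⟩ := hr
    rw [Matrix.det_zero_of_row_eq hne (by ext j; simp [hab]), absv_zero]
    exact wedgeNorm_nonneg F s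

/-- Expanding the minors of `g * s` multilinearly in the rows bounds them by the minors of `s`. -/
lemma wedgeNorm_mul_le (F : Type*) [Field F] [Fintype F] {d i : ℕ}
    (g : Matrix (Fin d) (Fin d) (LaurentSeries F)) (s : Matrix (Fin d) (Fin i) (LaurentSeries F))
    {A : ℝ} (hA : 0 ≤ A) (hg : ∀ a b, absv F (g a b) ≤ A) :
    wedgeNorm F (g * s) ≤ A ^ i * wedgeNorm F s := by
  have hB : 0 ≤ A ^ i * wedgeNorm F s := mul_nonneg (by positivity) (wedgeNorm_nonneg F s)
  refine Real.iSup_le (fun I => ?_) hB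
  unfold minor
  set f : Fin i → Fin d := fun a => ((I.1.orderIsoOfFin I.2 a : {x // x ∈ I.1}) : Fin d)
  have h1 : (Matrix.submatrix (g * s) f id).det
      = ∑ r : Fin i → Fin d, (∏ a, g (f a) (r a)) * (s.submatrix r id).det := by
    have h2 : (Matrix.submatrix (g * s) f id) = fun a => ∑ k, g (f a) k • s k := by
      ext a b
      simp [Matrix.mul_apply]
    rw [h2]
    change (Matrix.detRowAlternating (R := LaurentSeries F) (n := Fin i)).toMultilinearMap
      (fun a => ∑ k, g (f a) k • s k) = _
    rw [MultilinearMap.map_sum]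
    refine Finset.sum_congr rfl fun r _ => ?_
    rw [MultilinearMap.map_smul_univ]
    rfl
  rw [h1]
  refine absv_sum_le F _ _ hB fun r _ => ?_
  rw [absv_mul, absv_prod]
  refine mul_le_mul ?_ (absv_det_rows_le F s r) (absv_nonneg F _) (by positivity)
  calc ∏ a, absv F (g (f a) (r a)) ≤ ∏ _a : Fin i, A :=
        Finset.prod_le_prod (fun _ _ => absv_nonneg F _) fun _ _ => hg _ _
    _ = A ^ i := by simp

lemma wedgeNormVecs_mulVec_le (F : Type*) [Field F] [Fintype F] {d i : ℕ}
    (g : Matrix (Fin d) (Fin d) (LaurentSeries F)) (b : Fin i → (Fin d → LaurentSeries F))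
    {A : ℝ} (hA : 0 ≤ A) (hg : ∀ a b, absv F (g a b) ≤ A) :
    wedgeNormVecs F (fun j => g.mulVec (b j)) ≤ A ^ i * wedgeNormVecs F b := by
  have h : (Matrix.of fun k j => (g.mulVec (b j)) k)
      = g * (Matrix.of fun k j => b j k) := by
    ext k j
    simp [Matrix.mul_apply, Matrix.mulVec, dotProduct]
  unfold wedgeNormVecs
  rw [h]
  exact wedgeNorm_mul_le F g _ hA hg

/-! ### Variation of the height functions under the group action -/

/-- The values `1/‖L‖` whose supremum is `α_i(x)`. -/
def alphaSet (F : Type*) [Field F] [Fintype F] (d i : ℕ) (x : XSpace F d) : Set ℝ :=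
  {r : ℝ | ∃ b : Fin i → (Fin d → LaurentSeries F),
    (∀ j, b j ∈ latticeSet F x) ∧
    LinearIndependent (LaurentSeries F) b ∧
    (∀ v ∈ latticeSet F x, v ∈ Submodule.span (LaurentSeries F) (Set.range b) →
      ∃ c : Fin i → Polynomial F, v = ∑ j, polyToK F (c j) • b j) ∧
    r = (wedgeNormVecs F b)⁻¹}

lemma alphaSet_nonneg (F : Type*) [Field F] [Fintype F] (d i : ℕ) (x : XSpace F d) :
    ∀ r ∈ alphaSet F d i x, 0 ≤ r := by
  rintro r ⟨b, -, -, -, rfl⟩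
  exact inv_nonneg.2 (wedgeNorm_nonneg F _)

lemma mulVec_mem_lattice (F : Type*) [Field F] [Fintype F] {d : ℕ} (g : SLK F d)
    (x : XSpace F d) {v : Fin d → LaurentSeries F} (hv : v ∈ latticeSet F x) :
    (g : Matrix (Fin d) (Fin d) (LaurentSeries F)).mulVec v ∈ latticeSet F (g • x) := by
  obtain ⟨h, rfl, w, rfl⟩ := hv
  exact ⟨g * h, rfl, w, by rw [Matrix.mulVec_mulVec, Matrix.SpecialLinearGroup.coe_mul]⟩

lemma inv_mulVec_mulVec (F : Type*) [Field F] [Fintype F] {d : ℕ} (g : SLK F d)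
    (v : Fin d → LaurentSeries F) :
    ((g⁻¹ : SLK F d) : Matrix (Fin d) (Fin d) (LaurentSeries F)).mulVec
      ((g : Matrix (Fin d) (Fin d) (LaurentSeries F)).mulVec v) = v := by
  rw [Matrix.mulVec_mulVec, ← Matrix.SpecialLinearGroup.coe_mul, inv_mul_cancel,
    Matrix.SpecialLinearGroup.coe_one, Matrix.one_mulVec]

lemma alphaSet_smul (F : Type*) [Field F] [Fintype F] {d i : ℕ} (g : SLK F d) (x : XSpace F d)
    {A : ℝ} (hA : 0 ≤ A)
    (hg : ∀ a b, absv F ((g : Matrix (Fin d) (Fin d) (LaurentSeries F)) a b) ≤ A)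
    (hg' : ∀ a b, absv F (((g⁻¹ : SLK F d) : Matrix (Fin d) (Fin d) (LaurentSeries F)) a b) ≤ A)
    {r : ℝ} (hr : r ∈ alphaSet F d i x) : ∃ r' ∈ alphaSet F d i (g • x), r ≤ A ^ i * r' := by
  obtain ⟨b, hb, hli, hgen, rfl⟩ := hr
  set G := (g : Matrix (Fin d) (Fin d) (LaurentSeries F))
  have hinj : Function.Injective G.mulVecLin := by
    intro v w hvw
    have := congrArg
      (((g⁻¹ : SLK F d) : Matrix (Fin d) (Fin d) (LaurentSeries F)).mulVec) hvw
    simpa only [Matrix.mulVecLin_apply, G, inv_mulVec_mulVec] using this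
  refine ⟨_, ⟨fun j => G.mulVec (b j), fun j => mulVec_mem_lattice F g x (hb j),
    hli.map' G.mulVecLin (LinearMap.ker_eq_bot.2 hinj), ?_, rfl⟩, ?_⟩
  · intro v hv hspan
    have h1 : Set.range (fun j => G.mulVec (b j)) = G.mulVecLin '' Set.range b := by
      rw [← Set.range_comp]; rfl
    rw [h1, Submodule.span_image] at hspan
    obtain ⟨w, hw, rfl⟩ := hspan
    have h2 := mulVec_mem_lattice F g⁻¹ (g • x) hv
    rw [inv_smul_smul, Matrix.mulVecLin_apply, inv_mulVec_mulVec] at h2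
    obtain ⟨c, hc⟩ := hgen w h2 hw
    refine ⟨c, ?_⟩
    rw [hc, map_sum]
    simp only [map_smul, Matrix.mulVecLin_apply]
  · have h1 := wedgeNormVecs_mulVec_le F G b hA hg
    have h2 := wedgeNormVecs_mulVec_le F _ (fun j => G.mulVec (b j)) hA hg'
    simp only [G, inv_mulVec_mulVec] at h1 h2
    have n1 : 0 ≤ wedgeNormVecs F b := wedgeNorm_nonneg F _
    have n2 : 0 ≤ wedgeNormVecs F (fun j => G.mulVec (b j)) := wedgeNorm_nonneg F _
    rcases n1.eq_or_lt with h | h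
    · rw [← h, inv_zero]
      exact mul_nonneg (by positivity) (inv_nonneg.2 n2)
    have n3 : 0 < wedgeNormVecs F (fun j => G.mulVec (b j)) := by
      rcases n2.eq_or_lt with h' | h'
      · rw [← h', mul_zero] at h2
        exact absurd h2 (not_le.2 h)
      · exact h'
    rw [← div_eq_mul_inv, le_div_iff₀ n3, inv_mul_le_iff₀ h, mul_comm]
    exact h1

/-- Two mutually comparable sets of reals have comparable suprema. If one is unbounded, so is the
other, and both suprema take the default value `0`. -/
lemma sSup_le_mul_sSup {S S' : Set ℝ} {C : ℝ} (hC : 0 ≤ C) (hS' : ∀ r ∈ S', 0 ≤ r)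
    (h : ∀ r ∈ S, ∃ r' ∈ S', r ≤ C * r') (h' : ∀ r ∈ S', ∃ r' ∈ S, r ≤ C * r') :
    sSup S ≤ C * sSup S' := by
  have h0 : 0 ≤ C * sSup S' := mul_nonneg hC (Real.sSup_nonneg hS')
  by_cases hb : BddAbove S'
  · refine Real.sSup_le (fun r hr => ?_) h0
    obtain ⟨r', hr', hle⟩ := h r hr
    exact hle.trans (mul_le_mul_of_nonneg_left (le_csSup hb hr') hC)
  · rw [Real.sSup_of_not_bddAbove (s := S)]
    · exact h0
    · rintro ⟨B, hB⟩
      refine hb ⟨C * B, fun r hr => ?_⟩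
      obtain ⟨r', hr', hle⟩ := h' r hr
      exact hle.trans (mul_le_mul_of_nonneg_left (hB hr') hC)

lemma alpha_smul_le (F : Type*) [Field F] [Fintype F] {d i : ℕ} (hi : i ≤ d) (g : SLK F d)
    (x : XSpace F d) {A : ℝ} (hA : 1 ≤ A)
    (hg : ∀ a b, absv F ((g : Matrix (Fin d) (Fin d) (LaurentSeries F)) a b) ≤ A)
    (hg' : ∀ a b, absv F (((g⁻¹ : SLK F d) : Matrix (Fin d) (Fin d) (LaurentSeries F)) a b) ≤ A) :
    alpha F d i (g • x) ≤ A ^ d * alpha F d i x := by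
  unfold alpha
  split_ifs with h
  · rw [mul_one]
    exact one_le_pow₀ hA
  · have hA0 : 0 ≤ A := zero_le_one.trans hA
    change sSup (alphaSet F d i (g • x)) ≤ A ^ d * sSup (alphaSet F d i x)
    refine (sSup_le_mul_sSup (C := A ^ i) (by positivity) (alphaSet_nonneg F d i x) ?_ ?_).trans
      (mul_le_mul_of_nonneg_right (pow_le_pow_right₀ hA hi)
        (Real.sSup_nonneg (alphaSet_nonneg F d i x)))
    · intro r hr
      have := alphaSet_smul F g⁻¹ (g • x) hA0 hg' (by rwa [inv_inv]) hr
      rwa [inv_smul_smul] at this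
    · intro r hr
      exact alphaSet_smul F g x hA0 hg hg' hr

lemma alpha_nonneg (F : Type*) [Field F] [Fintype F] (d i : ℕ) (x : XSpace F d) :
    0 ≤ alpha F d i x := by
  unfold alpha
  split_ifs
  · exact zero_le_one
  · exact Real.sSup_nonneg (alphaSet_nonneg F d i x)

lemma betaFull_nonneg (m n i : ℕ) : 0 ≤ betaFull m n i := by
  unfold betaFull betaE
  split_ifs <;> positivity

lemma alphaTilde_term_nonneg (F : Type*) [Field F] [Fintype F] {m n : ℕ} {ω : ℕ → ℝ}
    (hω : ∀ i ≤ m + n, 0 < ω i) (x : XSpace F (m + n)) {i : ℕ} (hi : i ≤ m + n) :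
    0 ≤ (ω i * alpha F (m + n) i x) ^ betaFull m n i :=
  Real.rpow_nonneg (mul_nonneg (hω i hi).le (alpha_nonneg F _ _ _)) _

lemma alphaTilde_nonneg (F : Type*) [Field F] [Fintype F] {m n : ℕ} {ω : ℕ → ℝ}
    (hω : ∀ i ≤ m + n, 0 < ω i) (x : XSpace F (m + n)) : 0 ≤ alphaTilde F m n ω x :=
  Finset.sum_nonneg fun i hi =>
    alphaTilde_term_nonneg F hω x (Nat.lt_succ_iff.1 (Finset.mem_range.1 hi))

/-- Each `g ∈ G` distorts `α̃` by a bounded factor. -/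
lemma alphaTilde_smul_bound (F : Type*) [Field F] [Fintype F] {m n : ℕ} {ω : ℕ → ℝ}
    (hω : ∀ i ≤ m + n, 0 < ω i) (g : SLK F (m + n)) :
    ∃ C : ℝ, 0 ≤ C ∧ ∀ x, alphaTilde F m n ω (g • x) ≤ C * alphaTilde F m n ω x := by
  let E : SLK F (m + n) → ℝ := fun h => ∑ a, ∑ b, absv F (h.1 a b)
  have hE0 : ∀ h, 0 ≤ E h := fun h =>
    Finset.sum_nonneg fun _ _ => Finset.sum_nonneg fun _ _ => absv_nonneg F _
  have hE : ∀ h : SLK F (m + n), ∀ a b, absv F (h.1 a b) ≤ E h := fun h a b =>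
    (Finset.single_le_sum (f := fun b => absv F (h.1 a b)) (fun _ _ => absv_nonneg F _)
      (Finset.mem_univ b)).trans
    (Finset.single_le_sum (f := fun a => ∑ b, absv F (h.1 a b))
      (fun _ _ => Finset.sum_nonneg fun _ _ => absv_nonneg F _) (Finset.mem_univ a))
  set A : ℝ := 1 + E g + E g⁻¹ with hAdef
  have hA : 1 ≤ A := by linarith [hE0 g, hE0 g⁻¹]
  have hgA : ∀ a b, absv F (g.1 a b) ≤ A := fun a b => by linarith [hE0 g⁻¹, hE g a b]
  have hgA' : ∀ a b, absv F ((g⁻¹ : SLK F (m + n)).1 a b) ≤ A := fun a b => by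
    linarith [hE0 g, hE g⁻¹ a b]
  have hD : 0 ≤ A ^ (m + n) := by positivity
  refine ⟨∑ i ∈ Finset.range (m + n + 1), (A ^ (m + n)) ^ betaFull m n i,
    Finset.sum_nonneg fun _ _ => Real.rpow_nonneg hD _, fun x => ?_⟩
  rw [Finset.sum_mul]
  refine Finset.sum_le_sum fun i hi => ?_
  have hi' : i ≤ m + n := Nat.lt_succ_iff.1 (Finset.mem_range.1 hi)
  have h1 := alpha_smul_le F hi' g x hA hgA hgA'
  calc (ω i * alpha F (m + n) i (g • x)) ^ betaFull m n i
      ≤ (A ^ (m + n) * (ω i * alpha F (m + n) i x)) ^ betaFull m n i := by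
        refine Real.rpow_le_rpow (mul_nonneg (hω i hi').le (alpha_nonneg F _ _ _)) ?_
          (betaFull_nonneg m n i)
        rw [mul_left_comm]
        exact mul_le_mul_of_nonneg_left h1 (hω i hi').le
    _ = (A ^ (m + n)) ^ betaFull m n i * (ω i * alpha F (m + n) i x) ^ betaFull m n i :=
        Real.mul_rpow hD (mul_nonneg (hω i hi').le (alpha_nonneg F _ _ _))
    _ ≤ _ := mul_le_mul_of_nonneg_left
        (Finset.single_le_sum (f := fun i => (ω i * alpha F (m + n) i x) ^ betaFull m n i)
          (fun j hj => alphaTilde_term_nonneg F hω x (Nat.lt_succ_iff.1 (Finset.mem_range.1 hj)))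
          hi) (Real.rpow_nonneg hD _)

/-! ### The elements `g_t` and `u_s` -/

lemma uElem_add (F : Type*) [Field F] [Fintype F] {m n : ℕ}
    (a b : Matrix (Fin m) (Fin n) (LaurentSeries F)) :
    uElem F (a + b) = uElem F a * uElem F b := by
  apply Subtype.ext
  change uMat F (a + b) = uMat F a * uMat F b
  simp only [uMat, Matrix.reindex_apply, Matrix.submatrix_mul_equiv, Matrix.fromBlocks_multiply]
  simp [add_comm]

lemma uElem_neg (F : Type*) [Field F] [Fintype F] {m n : ℕ}
    (a : Matrix (Fin m) (Fin n) (LaurentSeries F)) : uElem F (-a) = (uElem F a)⁻¹ := by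
  rw [eq_inv_iff_mul_eq_one, ← uElem_add, neg_add_cancel]
  apply Subtype.ext
  simp [uElem, uMat]

lemma gElem_add (F : Type*) [Field F] [Fintype F] (m n : ℕ) (a b : ℤ) :
    gElem F m n (a + b) = gElem F m n a * gElem F m n b := by
  apply Subtype.ext
  change gMat F m n (a + b) = gMat F m n a * gMat F m n b
  simp only [gMat, Matrix.reindex_apply, Matrix.submatrix_mul_equiv, Matrix.fromBlocks_multiply]
  simp only [mul_add, neg_add, zpow_add₀ (Xu_ne_zero F)]
  simp [smul_smul, mul_comm]

/-- Conjugation by `g_t` expands the horospherical direction by `T^{(m+n)t}`. -/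
lemma gElem_mul_uElem (F : Type*) [Field F] [Fintype F] (m n : ℕ) (t : ℤ)
    (s : Matrix (Fin m) (Fin n) (LaurentSeries F)) :
    gElem F m n t * uElem F (Xu F ^ (((m + n : ℕ) : ℤ) * t) • s) = uElem F s * gElem F m n t := by
  apply Subtype.ext
  change gMat F m n t * uMat F _ = uMat F s * gMat F m n t
  simp only [gMat, uMat, Matrix.reindex_apply, Matrix.submatrix_mul_equiv,
    Matrix.fromBlocks_multiply]
  have : Xu F ^ (((m + n : ℕ) : ℤ) * t) * Xu F ^ (-((n : ℤ) * t)) = Xu F ^ ((m : ℤ) * t) := by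
    rw [← zpow_add₀ (Xu_ne_zero F)]
    congr 1
    push_cast
    ring
  simp only [Matrix.mul_one, Matrix.one_mul, Matrix.mul_zero, Matrix.zero_mul, add_zero, zero_add,
    Matrix.smul_mul, Matrix.mul_smul, smul_smul, this, smul_zero]

lemma absv_uElem_le (F : Type*) [Field F] [Fintype F] {m n : ℕ}
    {s : Matrix (Fin m) (Fin n) (LaurentSeries F)} (hs : s ∈ intMat F m n) (a b) :
    absv F ((uElem F s).1 a b) ≤ 1 := by
  change absv F (uMat F s a b) ≤ 1
  have hone : ∀ {k : ℕ} (i j : Fin k),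
      absv F ((1 : Matrix (Fin k) (Fin k) (LaurentSeries F)) i j) ≤ 1 := by
    intro k i j
    rw [Matrix.one_apply]
    split_ifs
    · exact (absv_one F).le
    · rw [absv_zero]; exact zero_le_one
  unfold uMat
  rw [Matrix.reindex_apply, Matrix.submatrix_apply]
  rcases finSumFinEquiv.symm a with i | i <;> rcases finSumFinEquiv.symm b with j | j
  · exact hone i j
  · exact hs i j
  · simp [absv_zero]
  · exact hone i j

/-- `α̃` is invariant under `u_s` with `s` integral. -/
lemma alphaTilde_uElem (F : Type*) [Field F] [Fintype F] {m n : ℕ} (ω : ℕ → ℝ)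
    {s : Matrix (Fin m) (Fin n) (LaurentSeries F)} (hs : s ∈ intMat F m n)
    (x : XSpace F (m + n)) :
    alphaTilde F m n ω (uElem F s • x) = alphaTilde F m n ω x := by
  have hs' : -s ∈ intMat F m n := fun i j => by
    rw [Matrix.neg_apply, absv_neg]; exact hs i j
  unfold alphaTilde
  refine Finset.sum_congr rfl fun i hi => ?_
  have hi' : i ≤ m + n := Nat.lt_succ_iff.1 (Finset.mem_range.1 hi)
  have key : ∀ {s : Matrix (Fin m) (Fin n) (LaurentSeries F)}, s ∈ intMat F m n →
      -s ∈ intMat F m n → ∀ x : XSpace F (m + n),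
      alpha F (m + n) i (uElem F s • x) ≤ alpha F (m + n) i x := by
    intro s h h' x
    have := alpha_smul_le F hi' (uElem F s) x le_rfl (absv_uElem_le F h)
      (by rw [← uElem_neg]; exact absv_uElem_le F h')
    simpa using this
  have h2 := key hs' (by rwa [neg_neg]) (uElem F s • x)
  rw [uElem_neg, inv_smul_smul] at h2
  rw [le_antisymm (key hs hs' x) h2]

/-! ### Partition of the integral matrices into balls -/

/-- The closed ball of radius `q^{-k}` around `a`. -/
def kBall (F : Type*) [Field F] [Fintype F] {m n : ℕ} (k : ℤ)
    (a : Matrix (Fin m) (Fin n) (LaurentSeries F)) :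
    Set (Matrix (Fin m) (Fin n) (LaurentSeries F)) :=
  {s | ∀ i j, absv F (s i j - a i j) ≤ (Fintype.card F : ℝ) ^ (-k)}

/-- Digit arrays: the classes of integral matrices modulo `u^k`, listed by the first `k`
coefficients of each entry. -/
abbrev Digits (F : Type*) (m n k : ℕ) := Fin m → Fin n → Fin k → F

/-- The integral matrix with prescribed first `k` coefficients, the remaining ones being `0`. -/
noncomputable def digitRep (F : Type*) [Field F] {m n k : ℕ} (c : Digits F m n k) :
    Matrix (Fin m) (Fin n) (LaurentSeries F) :=
  Matrix.of fun i j => ∑ l : Fin k, HahnSeries.single ((l : ℕ) : ℤ) (c i j l)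

lemma digitRep_coeff (F : Type*) [Field F] {m n k : ℕ} (c : Digits F m n k) (i : Fin m)
    (j : Fin n) (l : Fin k) : (digitRep F c i j).coeff ((l : ℕ) : ℤ) = c i j l := by
  have h : ∀ l' : Fin k, (((l : ℕ) : ℤ) = ((l' : ℕ) : ℤ)) ↔ l = l' := fun l' => by
    rw [Nat.cast_inj, Fin.ext_iff]
  simp only [digitRep, Matrix.of_apply, HahnSeries.coeff_sum, HahnSeries.coeff_single, h]
  simp

lemma digitRep_coeff_neg (F : Type*) [Field F] {m n k : ℕ} (c : Digits F m n k) (i : Fin m)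
    (j : Fin n) {l : ℤ} (hl : l < 0) : (digitRep F c i j).coeff l = 0 := by
  have h : ∀ l' : Fin k, ¬ l = ((l' : ℕ) : ℤ) := fun l' => by lia
  simp only [digitRep, Matrix.of_apply, HahnSeries.coeff_sum, HahnSeries.coeff_single, h]
  simp

lemma mem_intMat_iff (F : Type*) [Field F] [Fintype F] {m n : ℕ}
    (s : Matrix (Fin m) (Fin n) (LaurentSeries F)) :
    s ∈ intMat F m n ↔ ∀ i j, ∀ l < (0 : ℤ), (s i j).coeff l = 0 := by
  refine forall₂_congr fun i j => ?_
  rw [← absv_le_iff, neg_zero, zpow_zero]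

lemma mem_kBall_iff (F : Type*) [Field F] [Fintype F] {m n : ℕ} (k : ℤ)
    (a s : Matrix (Fin m) (Fin n) (LaurentSeries F)) :
    s ∈ kBall F k a ↔ ∀ i j, ∀ l < k, (s i j).coeff l = (a i j).coeff l := by
  refine forall₂_congr fun i j => ?_
  simp only [absv_le_iff, HahnSeries.coeff_sub, sub_eq_zero]

lemma digitRep_mem (F : Type*) [Field F] [Fintype F] {m n k : ℕ} (c : Digits F m n k) :
    digitRep F c ∈ intMat F m n :=
  (mem_intMat_iff F _).2 fun i j _ hl => digitRep_coeff_neg F c i j hl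

lemma mem_kBall_digitRep_iff (F : Type*) [Field F] [Fintype F] {m n k : ℕ} (c : Digits F m n k)
    (s : Matrix (Fin m) (Fin n) (LaurentSeries F)) :
    s ∈ kBall F k (digitRep F c) ↔
      s ∈ intMat F m n ∧ (fun i j (l : Fin k) => (s i j).coeff ((l : ℕ) : ℤ)) = c := by
  rw [mem_kBall_iff, mem_intMat_iff]
  constructor
  · intro h
    refine ⟨fun i j l hl => ?_, ?_⟩
    · rw [h i j l (by lia), digitRep_coeff_neg F c i j hl]
    · funext i j l
      rw [h i j _ (by have := l.2; lia), digitRep_coeff]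
  · rintro ⟨h, rfl⟩ i j l hl
    by_cases h0 : l < 0
    · rw [h i j l h0, digitRep_coeff_neg F _ i j h0]
    · push Not at h0
      lift l to ℕ using h0
      exact (digitRep_coeff F (fun i j (l : Fin k) => (s i j).coeff ((l : ℕ) : ℤ)) i j
        ⟨l, by exact_mod_cast hl⟩).symm

lemma intMat_eq_iUnion (F : Type*) [Field F] [Fintype F] (m n k : ℕ) :
    intMat F m n = ⋃ c : Digits F m n k, kBall F k (digitRep F c) := by
  ext s
  simp only [Set.mem_iUnion, mem_kBall_digitRep_iff]
  exact ⟨fun h => ⟨fun i j (l : Fin k) => (s i j).coeff ((l : ℕ) : ℤ), h, rfl⟩, fun ⟨_, h, _⟩ => h⟩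

lemma kBall_disjoint (F : Type*) [Field F] [Fintype F] (m n k : ℕ) :
    Pairwise (Function.onFun Disjoint
      fun c : Digits F m n k => kBall F (k : ℤ) (digitRep F c)) := by
  intro c c' hne
  refine Set.disjoint_left.2 fun s h h' => hne ?_
  rw [mem_kBall_digitRep_iff] at h h'
  exact h.2.symm.trans h'.2

lemma isOpen_valuation_le (F : Type*) [Field F] (k : ℤ) :
    IsOpen {x : LaurentSeries F | Valued.v x ≤ WithZero.exp (-k)} := by
  have hc : Continuous fun x : LaurentSeries F => HahnSeries.single (-k) (1 : F) * x :=
    continuous_const.mul continuous_id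
  convert (Valued.isOpen_integer (LaurentSeries F)).preimage hc using 1
  ext x
  rw [Set.mem_preimage, SetLike.mem_coe, Valuation.mem_integer_iff, map_mul,
    LaurentSeries.valuation_single_zpow, Set.mem_ofPred_eq, neg_neg, WithZero.exp_neg]
  rw [mul_comm, ← le_div_iff₀ (by simp), one_div]

lemma kBall_isOpen (F : Type*) [Field F] [Fintype F] {m n : ℕ} (k : ℤ)
    (a : Matrix (Fin m) (Fin n) (LaurentSeries F)) : IsOpen (kBall F k a) := by
  have h : kBall F k a = ⋂ i, ⋂ j, (fun s : Matrix (Fin m) (Fin n) (LaurentSeries F) =>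
      s i j - a i j) ⁻¹' {x | Valued.v x ≤ WithZero.exp (-k)} := by
    ext s
    simp only [kBall, Set.mem_ofPred_eq, Set.mem_iInter, Set.mem_preimage,
      LaurentSeries.valuation_le_iff_coeff_lt_eq_zero, absv_le_iff]
  rw [h]
  refine isOpen_iInter_of_finite fun i => isOpen_iInter_of_finite fun j => ?_
  exact (isOpen_valuation_le F k).preimage
    ((continuous_id.matrix_elem i j).sub continuous_const)

lemma measurableSet_kBall (F : Type*) [Field F] [Fintype F] {m n : ℕ} (k : ℤ)
    (a : Matrix (Fin m) (Fin n) (LaurentSeries F)) : MeasurableSet (kBall F k a) :=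
  have : BorelSpace (Matrix (Fin m) (Fin n) (LaurentSeries F)) := ⟨rfl⟩
  (kBall_isOpen F k a).measurableSet

lemma measure_kBall (F : Type*) [Field F] [Fintype F] {m n : ℕ}
    (μ : MeasureTheory.Measure (Matrix (Fin m) (Fin n) (LaurentSeries F)))
    (hinv : ∀ a, μ.map (fun s => a + s) = μ) (k : ℤ)
    (a : Matrix (Fin m) (Fin n) (LaurentSeries F)) : μ (kBall F k a) = μ (kBall F k 0) := by
  have : BorelSpace (Matrix (Fin m) (Fin n) (LaurentSeries F)) := ⟨rfl⟩
  have hmeas : Measurable (fun s : Matrix (Fin m) (Fin n) (LaurentSeries F) => a + s) :=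
    (continuous_const.add continuous_id).measurable
  conv_lhs => rw [← hinv a, Measure.map_apply hmeas (measurableSet_kBall F k a)]
  congr 1
  ext s
  simp [kBall]

lemma card_mul_measure (F : Type*) [Field F] [Fintype F] {m n : ℕ}
    (μ : MeasureTheory.Measure (Matrix (Fin m) (Fin n) (LaurentSeries F)))
    (hinv : ∀ a, μ.map (fun s => a + s) = μ) (hnorm : μ (intMat F m n) = 1) (k : ℕ) :
    (Fintype.card (Digits F m n k) : ℝ≥0∞) *
      μ (kBall F k (0 : Matrix (Fin m) (Fin n) (LaurentSeries F))) = 1 := by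
  rw [← hnorm, intMat_eq_iUnion F m n k, measure_iUnion (kBall_disjoint F m n k)
    fun c => measurableSet_kBall F _ _, tsum_fintype,
    Finset.sum_congr rfl fun c _ => measure_kBall F μ hinv k _]
  simp

/-- A function on the integral matrices which is constant modulo `u^k` has integral equal to the
average of its values on digit representatives. -/
lemma lintegral_digits (F : Type*) [Field F] [Fintype F] {m n : ℕ}
    (μ : MeasureTheory.Measure (Matrix (Fin m) (Fin n) (LaurentSeries F)))
    (hinv : ∀ a, μ.map (fun s => a + s) = μ) (k : ℕ)
    (f : Matrix (Fin m) (Fin n) (LaurentSeries F) → ℝ≥0∞)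
    (hf : ∀ c : Digits F m n k, ∀ s ∈ kBall F k (digitRep F c), f s = f (digitRep F c)) :
    ∫⁻ s in intMat F m n, f s ∂μ = (∑ c : Digits F m n k, f (digitRep F c)) *
      μ (kBall F k (0 : Matrix (Fin m) (Fin n) (LaurentSeries F))) := by
  rw [intMat_eq_iUnion F m n k, lintegral_iUnion (fun c => measurableSet_kBall F _ _)
    (kBall_disjoint F m n k), tsum_fintype, Finset.sum_mul]
  refine Finset.sum_congr rfl fun c _ => ?_
  rw [setLIntegral_congr_fun (measurableSet_kBall F _ _) (hf c), setLIntegral_const,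
    measure_kBall F μ hinv]

/-! ### The recursive covering -/

/-- Writing `s = r + u^{(m+n)t} s'`, the orbit of `u_s x` from time `t` on is the orbit of
`u_{s'} y`, where `y = g_t u_r x`. -/
lemma shift_orbit (F : Type*) [Field F] [Fintype F] {m n : ℕ} (t a : ℤ)
    (r s' : Matrix (Fin m) (Fin n) (LaurentSeries F)) (x : XSpace F (m + n)) :
    (gElem F m n (a + t) * uElem F (r + Xu F ^ (((m + n : ℕ) : ℤ) * t) • s')) • x
      = (gElem F m n a * uElem F s') • ((gElem F m n t * uElem F r) • x) := by
  rw [smul_smul, add_comm r, uElem_add, gElem_add, mul_assoc (gElem F m n a),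
    ← mul_assoc (gElem F m n t), gElem_mul_uElem]
  simp only [mul_assoc]

lemma exists_decomp (F : Type*) [Field F] [Fintype F] {m n : ℕ} (k : ℤ)
    {s a : Matrix (Fin m) (Fin n) (LaurentSeries F)} (hs : s ∈ kBall F k a) :
    ∃ s' ∈ intMat F m n, s = a + Xu F ^ k • s' := by
  refine ⟨Xu F ^ (-k) • (s - a), fun i j => ?_, ?_⟩
  · rw [Matrix.smul_apply, smul_eq_mul, absv_mul, absv_Xu_zpow, neg_neg, Matrix.sub_apply]
    have hq : (0 : ℝ) < (Fintype.card F : ℝ) ^ k := by have := one_lt_q F; positivity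
    calc _ ≤ (Fintype.card F : ℝ) ^ k * (Fintype.card F : ℝ) ^ (-k) :=
          mul_le_mul_of_nonneg_left (hs i j) hq.le
      _ = 1 := by rw [zpow_neg, mul_inv_cancel₀ hq.ne']
  · rw [smul_smul, ← zpow_add₀ (Xu_ne_zero F), add_neg_cancel, zpow_zero, one_smul,
      add_sub_cancel]

/-- `α̃(g_t u_s y)` depends only on `s` modulo `u^{(m+n)t}`. -/
lemma alphaTilde_kBall (F : Type*) [Field F] [Fintype F] {m n : ℕ} (ω : ℕ → ℝ) (t : ℤ)
    {s a : Matrix (Fin m) (Fin n) (LaurentSeries F)}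
    (hs : s ∈ kBall F (((m + n : ℕ) : ℤ) * t) a) (y : XSpace F (m + n)) :
    alphaTilde F m n ω ((gElem F m n t * uElem F s) • y)
      = alphaTilde F m n ω ((gElem F m n t * uElem F a) • y) := by
  obtain ⟨s', hs', rfl⟩ := exists_decomp F _ hs
  have h := shift_orbit F t 0 a s' y
  have h0 : gElem F m n 0 = 1 := by
    have := gElem_add F m n 0 0
    rw [add_zero] at this
    exact left_eq_mul.1 this
  rw [zero_add] at h
  rw [h, h0, one_mul, alphaTilde_uElem F ω hs']

/-- The integral contraction inequality as a finite sum over residues modulo `u^{(m+n)t}`. -/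
lemma sum_digits_le (F : Type*) [Field F] [Fintype F] {m n : ℕ} (hm : 1 ≤ m)
    (μ : MeasureTheory.Measure (Matrix (Fin m) (Fin n) (LaurentSeries F)))
    (hinv : ∀ a, μ.map (fun s => a + s) = μ) (hnorm : μ (intMat F m n) = 1)
    {ω : ℕ → ℝ} (hω : ∀ i ≤ m + n, 0 < ω i) (t : ℕ) {c : ℝ} (hc : 0 ≤ c) (y : XSpace F (m + n))
    (h : (∫⁻ s in intMat F m n,
        ENNReal.ofReal (alphaTilde F m n ω ((gElem F m n t * uElem F s) • y)) ∂μ)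
      ≤ ENNReal.ofReal (3 * c * (t : ℝ) * (Fintype.card F : ℝ) ^ (-(m * n * t : ℤ)) *
          alphaTilde F m n ω y)) :
    ∑ d : Digits F m n ((m + n) * t),
        alphaTilde F m n ω ((gElem F m n t * uElem F (digitRep F d)) • y)
      ≤ 3 * c * (t : ℝ) * (Fintype.card F : ℝ) ^ ((((m + n - 1) * m * n : ℕ) : ℤ) * t) *
          alphaTilde F m n ω y := by
  set k := (m + n) * t with hk
  have hq : (0 : ℝ) < (Fintype.card F : ℝ) := zero_lt_one.trans (one_lt_q F)
  have hy := alphaTilde_nonneg F hω y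
  rw [lintegral_digits F μ hinv k _ (fun d s hs => by
    rw [alphaTilde_kBall F ω t (by simpa only [hk, Nat.cast_mul] using hs)])] at h
  have h2 := mul_le_mul_right h (Fintype.card (Digits F m n k) : ℝ≥0∞)
  rw [mul_left_comm, card_mul_measure F μ hinv hnorm, mul_one,
    ← ENNReal.ofReal_sum_of_nonneg (fun _ _ => alphaTilde_nonneg F hω _),
    ← ENNReal.ofReal_natCast, ← ENNReal.ofReal_mul (by positivity),
    ENNReal.ofReal_le_ofReal_iff (by positivity)] at h2
  refine h2.trans (le_of_eq ?_)
  have hcard : (Fintype.card (Digits F m n k) : ℝ)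
      = (Fintype.card F : ℝ) ^ (((m + n) * t * n * m : ℕ) : ℤ) := by
    simp only [Digits, Fintype.card_fun, Fintype.card_fin, zpow_natCast]
    push_cast
    rw [← pow_mul, ← pow_mul, ← mul_assoc, hk]
  have hexp : (Fintype.card F : ℝ) ^ ((((m + n - 1) * m * n : ℕ) : ℤ) * t)
      = (Fintype.card F : ℝ) ^ (((m + n) * t * n * m : ℕ) : ℤ) *
        (Fintype.card F : ℝ) ^ (-(m * n * t : ℤ)) := by
    rw [← zpow_add₀ hq.ne']
    congr 1
    have h1 : 1 ≤ m + n := by lia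
    push_cast [Nat.cast_sub h1]
    ring
  rw [hcard, hexp]
  ring

/-- The set `Z_x(M, N, t)` of integral `s` whose orbit stays above height `M` at the times
`t, 2t, …, Nt`. -/
def badSet (F : Type*) [Field F] [Fintype F] (m n : ℕ) (ω : ℕ → ℝ) (t : ℤ) (M : ℝ)
    (x : XSpace F (m + n)) (N : ℕ) : Set (Matrix (Fin m) (Fin n) (LaurentSeries F)) :=
  {s | s ∈ intMat F m n ∧ ∀ ℓ : ℕ, 1 ≤ ℓ → ℓ ≤ N →
    M < alphaTilde F m n ω ((gElem F m n ((ℓ : ℤ) * t) * uElem F s) • x)}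

/-- The set `Z_x(M, N, t)` is covered by a finite family of balls of radius `q^{-(m+n)tN}` whose
size is at most `B / M`. -/
def Covered (F : Type*) [Field F] [Fintype F] (m n : ℕ) (ω : ℕ → ℝ) (t : ℤ) (M : ℝ)
    (x : XSpace F (m + n)) (N : ℕ) (B : ℝ) : Prop :=
  ∃ centers : Finset (Matrix (Fin m) (Fin n) (LaurentSeries F)),
    (∀ a ∈ centers, a ∈ intMat F m n) ∧ (centers.card : ℝ) * M ≤ B ∧
    badSet F m n ω t M x N ⊆ ⋃ a ∈ centers, kBall F (((m + n : ℕ) : ℤ) * t * (N : ℤ)) a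

/-- One step of the recursion. Split the integral matrices into residue classes modulo
`u^{(m+n)t}`; only the classes whose point `y = g_t u_r x` is above `M` meet the bad set, and
in such a class the bad set is a rescaled copy of the bad set of `y`, one step shorter. -/
lemma covered_step (F : Type*) [Field F] [Fintype F] {m n : ℕ} {ω : ℕ → ℝ}
    (hω : ∀ i ≤ m + n, 0 < ω i) (t : ℕ) {M L : ℝ} (hL : 0 ≤ L) (N : ℕ) (x : XSpace F (m + n))
    (hsum : ∑ d : Digits F m n ((m + n) * t),
        alphaTilde F m n ω ((gElem F m n t * uElem F (digitRep F d)) • x)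
      ≤ L * alphaTilde F m n ω x)
    (hrec : ∀ y, M < alphaTilde F m n ω y →
      Covered F m n ω t M y N (alphaTilde F m n ω y * L ^ N)) :
    Covered F m n ω t M x (N + 1) (alphaTilde F m n ω x * L ^ (N + 1)) := by
  set k : ℤ := ((m + n : ℕ) : ℤ) * t with hk
  set y : Digits F m n ((m + n) * t) → XSpace F (m + n) :=
    fun d => (gElem F m n t * uElem F (digitRep F d)) • x with hy
  -- an empty family is chosen for the residue classes that do not meet the bad set
  have hch : ∀ d, ∃ S : Finset (Matrix (Fin m) (Fin n) (LaurentSeries F)),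
      (∀ a ∈ S, a ∈ intMat F m n) ∧ (S.card : ℝ) * M ≤ alphaTilde F m n ω (y d) * L ^ N ∧
      (M < alphaTilde F m n ω (y d) →
        badSet F m n ω t M (y d) N ⊆ ⋃ a ∈ S, kBall F (k * (N : ℤ)) a) := by
    intro d
    by_cases h : M < alphaTilde F m n ω (y d)
    · obtain ⟨S, h1, h2, h3⟩ := hrec (y d) h
      exact ⟨S, h1, h2, fun _ => h3⟩
    · refine ⟨∅, by simp, ?_, fun h' => absurd h' h⟩
      have := alphaTilde_nonneg F hω (y d)
      simp only [Finset.card_empty, Nat.cast_zero, zero_mul]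
      positivity
  choose S hSint hScard hScov using hch
  let φ : Digits F m n ((m + n) * t) → Matrix (Fin m) (Fin n) (LaurentSeries F) →
    Matrix (Fin m) (Fin n) (LaurentSeries F) := fun d a => digitRep F d + Xu F ^ k • a
  have hk0 : 0 ≤ k := by positivity
  refine ⟨Finset.univ.biUnion fun d => (S d).image (φ d), ?_, ?_, ?_⟩
  · intro b hb
    simp only [Finset.mem_biUnion, Finset.mem_univ, true_and, Finset.mem_image] at hb
    obtain ⟨d, a, ha, rfl⟩ := hb
    intro i j
    refine absv_add_le F (digitRep_mem F d i j) ?_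
    rw [Matrix.smul_apply, smul_eq_mul, absv_mul, absv_Xu_zpow]
    exact mul_le_one₀ (zpow_le_one_of_nonpos₀ (one_lt_q F).le (by lia)) (absv_nonneg F _)
      (hSint d a ha i j)
  · by_cases hM : 0 ≤ M
    · calc ((Finset.univ.biUnion fun d => (S d).image (φ d)).card : ℝ) * M
          ≤ (∑ d, ((S d).card : ℝ)) * M := by
            refine mul_le_mul_of_nonneg_right ?_ hM
            exact_mod_cast Finset.card_biUnion_le.trans
              (Finset.sum_le_sum fun d _ => Finset.card_image_le)
        _ = ∑ d, ((S d).card : ℝ) * M := Finset.sum_mul _ _ _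
        _ ≤ ∑ d, alphaTilde F m n ω (y d) * L ^ N := Finset.sum_le_sum fun d _ => hScard d
        _ = (∑ d, alphaTilde F m n ω (y d)) * L ^ N := (Finset.sum_mul _ _ _).symm
        _ ≤ L * alphaTilde F m n ω x * L ^ N :=
            mul_le_mul_of_nonneg_right hsum (by positivity)
        _ = alphaTilde F m n ω x * L ^ (N + 1) := by ring
    · have := alphaTilde_nonneg F hω x
      exact (mul_nonpos_of_nonneg_of_nonpos (Nat.cast_nonneg _) (not_le.1 hM).le).trans
        (by positivity)
  · rintro s ⟨hs, hbad⟩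
    rw [intMat_eq_iUnion F m n ((m + n) * t), Set.mem_iUnion] at hs
    obtain ⟨d, hd⟩ := hs
    have hd' : s ∈ kBall F k (digitRep F d) := by rw [hk]; exact_mod_cast hd
    have hyd : M < alphaTilde F m n ω (y d) := by
      have := hbad 1 le_rfl (by lia)
      rw [Nat.cast_one, one_mul, alphaTilde_kBall F ω t hd'] at this
      exact this
    obtain ⟨s', hs', rfl⟩ := exists_decomp F k hd'
    have hmem : s' ∈ badSet F m n ω t M (y d) N := by
      refine ⟨hs', fun ℓ h1 h2 => ?_⟩
      have := hbad (ℓ + 1) (by lia) (by lia)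
      rwa [Nat.cast_add, Nat.cast_one, add_mul, one_mul, shift_orbit] at this
    have hcov := hScov d hyd hmem
    simp only [Set.mem_iUnion] at hcov ⊢
    obtain ⟨a, ha, hball⟩ := hcov
    refine ⟨φ d a, by
      simp only [Finset.mem_biUnion, Finset.mem_univ, true_and, Finset.mem_image]
      exact ⟨d, a, ha, rfl⟩, fun i j => ?_⟩
    have he : (digitRep F d + Xu F ^ k • s') i j - φ d a i j
        = Xu F ^ k * (s' i j - a i j) := by
      simp [φ]
      ring
    have hq : (0 : ℝ) < (Fintype.card F : ℝ) := zero_lt_one.trans (one_lt_q F)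
    rw [he, absv_mul, absv_Xu_zpow,
      show -(k * ((N + 1 : ℕ) : ℤ)) = -k + -(k * (N : ℤ)) by push_cast; ring, zpow_add₀ hq.ne']
    exact mul_le_mul_of_nonneg_left (hball i j) (by positivity)

lemma covered_of_lt (F : Type*) [Field F] [Fintype F] {m n : ℕ} {ω : ℕ → ℝ}
    (hω : ∀ i ≤ m + n, 0 < ω i) (t : ℕ) {M T L : ℝ} (hL : 0 ≤ L) (hTM : T < M)
    (hsum : ∀ x, T < alphaTilde F m n ω x → ∑ d : Digits F m n ((m + n) * t),
        alphaTilde F m n ω ((gElem F m n t * uElem F (digitRep F d)) • x)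
      ≤ L * alphaTilde F m n ω x) (N : ℕ) :
    ∀ x, M < alphaTilde F m n ω x →
      Covered F m n ω t M x N (alphaTilde F m n ω x * L ^ N) := by
  induction N with
  | zero =>
    intro x hx
    refine ⟨{0}, by simp [intMat, absv_zero], by simpa using hx.le, fun s hs => ?_⟩
    simpa [kBall, intMat] using hs.1
  | succ N ih =>
    intro x hx
    exact covered_step F hω t hL N x (hsum x (hTM.trans hx)) ih


/-- **Corollary 6.3 (covering estimate).** There is `c > 0` depending only on `m, n` such
that the following holds.  Let `t ≥ 1` be an integer and `ω_0, …, ω_d > 0`, `T > 0` be such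
that `α̃ = Σ_{i=0}^d (ω_i α_i)^{β_i}` (with `β_0 = β_d = 1`) satisfies
`∫_{M_{m,n}(𝒪_∞)} α̃(g_t u_s y) dμ_{mn}(s) ≤ 3 c t q^{-mnt} α̃(y)` for every `y ∈ X` with
`α̃(y) > T`.  Then there is `M₀ = M₀(t) > T` such that for every `x ∈ X`, every integer
`N ≥ 1` and every `M > M₀`, the set
`Z_x(M,N,t) = {s ∈ M_{m,n}(𝒪_∞) : α̃(g_{ℓt} u_s x) > M for all 1 ≤ ℓ ≤ N}` can be covered
by at most `(α̃(x)/M)(3ct)^N q^{(m+n-1)mntN}` balls in `M_{m,n}(𝒪_∞)` of radius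
`q^{-(m+n)tN}` (balls for the sup-norm ultrametric, with centers in `M_{m,n}(𝒪_∞)`). -/
theorem stmt17 (F : Type*) [Field F] [Fintype F] (m n : ℕ) (hm : 1 ≤ m) (hn : 1 ≤ n)
    (μ : MeasureTheory.Measure (Matrix (Fin m) (Fin n) (LaurentSeries F)))
    (hinv : ∀ a, μ.map (fun s => a + s) = μ)
    (hnorm : μ (intMat F m n) = 1) :
    ∃ c : ℝ, 0 < c ∧ ∀ t : ℤ, 1 ≤ t → ∀ ω : ℕ → ℝ, (∀ i ≤ m + n, 0 < ω i) →
      ∀ T : ℝ, 0 < T →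
      (∀ y : XSpace F (m + n), T < alphaTilde F m n ω y →
        (∫⁻ s in intMat F m n,
            ENNReal.ofReal (alphaTilde F m n ω ((gElem F m n t * uElem F s) • y)) ∂μ)
          ≤ ENNReal.ofReal (3 * c * (t : ℝ) * (Fintype.card F : ℝ) ^ (-(m * n * t : ℤ)) *
              alphaTilde F m n ω y)) →
      ∃ M₀ : ℝ, T < M₀ ∧
        ∀ x : XSpace F (m + n), ∀ N : ℕ, 1 ≤ N → ∀ M : ℝ, M₀ < M →
          ∃ centers : Finset (Matrix (Fin m) (Fin n) (LaurentSeries F)),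
            (∀ cc ∈ centers, cc ∈ intMat F m n) ∧
            (centers.card : ℝ) ≤ (alphaTilde F m n ω x / M) * (3 * c * (t : ℝ)) ^ N *
                (Fintype.card F : ℝ) ^ ((((m + n - 1) * m * n : ℕ) : ℤ) * t * (N : ℤ)) ∧
            {s | s ∈ intMat F m n ∧ ∀ ℓ : ℕ, 1 ≤ ℓ → ℓ ≤ N →
                M < alphaTilde F m n ω ((gElem F m n ((ℓ : ℤ) * t) * uElem F s) • x)}
              ⊆ ⋃ cc ∈ centers,
                  {s' | ∀ k l, absv F (s' k l - cc k l) ≤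
                    (Fintype.card F : ℝ) ^ (-(((m + n : ℕ) : ℤ) * t * (N : ℤ)))} := by
  -- the argument uses no special property of `c`; any positive value works
  refine ⟨1, one_pos, fun t ht ω hω T hT hcontr => ?_⟩
  lift t to ℕ using by lia
  set q : ℝ := (Fintype.card F : ℝ) with hq
  have hq0 : 0 < q := zero_lt_one.trans (one_lt_q F)
  set L : ℝ := 3 * 1 * (t : ℝ) * q ^ ((((m + n - 1) * m * n : ℕ) : ℤ) * t) with hLdef
  have hL : 0 ≤ L := by positivity
  obtain ⟨C, hC, hCle⟩ := alphaTilde_smul_bound F hω (gElem F m n t)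
  have hsum : ∀ x, T < alphaTilde F m n ω x → ∑ d : Digits F m n ((m + n) * t),
        alphaTilde F m n ω ((gElem F m n t * uElem F (digitRep F d)) • x)
      ≤ L * alphaTilde F m n ω x := fun x hx =>
    sum_digits_le F hm μ hinv hnorm hω t zero_le_one x (by simpa using hcontr x hx)
  have hCT : 0 ≤ C * T := mul_nonneg hC hT.le
  refine ⟨T + C * T + 1, by linarith, fun x N hN M hM => ?_⟩
  have hM0 : 0 < M := by linarith
  have hx0 := alphaTilde_nonneg F hω x
  obtain ⟨N, rfl⟩ : ∃ N', N = N' + 1 := ⟨N - 1, by lia⟩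
  have hcov : Covered F m n ω t M x (N + 1) (alphaTilde F m n ω x * L ^ (N + 1)) := by
    by_cases hx : T < alphaTilde F m n ω x
    · exact covered_step F hω t hL N x (hsum x hx)
        (covered_of_lt F hω t hL (by linarith) hsum N)
    · -- starting below `T`, one step cannot reach height `M`, so the bad set is empty
      refine ⟨∅, by simp, by simp only [Finset.card_empty, Nat.cast_zero, zero_mul]; positivity,
        fun s hs => ?_⟩
      exfalso
      have h1 := hs.2 1 le_rfl (by lia)
      rw [Nat.cast_one, one_mul, mul_smul] at h1
      have h2 := hCle (uElem F s • x)
      rw [alphaTilde_uElem F ω hs.1] at h2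
      have h3 := mul_le_mul_of_nonneg_left (not_lt.1 hx) hC
      linarith
  obtain ⟨S, h1, h2, h3⟩ := hcov
  refine ⟨S, h1, ?_, h3⟩
  have h4 : alphaTilde F m n ω x * L ^ (N + 1) = alphaTilde F m n ω x * (3 * 1 * (t : ℝ)) ^ (N + 1)
      * q ^ ((((m + n - 1) * m * n : ℕ) : ℤ) * (t : ℤ) * ((N + 1 : ℕ) : ℤ)) := by
    rw [hLdef, mul_pow, zpow_mul q _ ((N + 1 : ℕ) : ℤ), zpow_natCast]
    exact (mul_assoc _ _ _).symm
  rw [h4, ← le_div_iff₀ hM0] at h2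
  refine h2.trans (le_of_eq ?_)
  simp only [Int.cast_natCast]
  ring
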